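/- arXiv:2509.06417 — 4 statements merged into one kernel-verified Lean document; each statement's English description precedes it below -/
import Mathlib

section
/- For every complex number z, s₀(z)³ + s₁(z)³ + s₂(z)³ − 3·s₀(z)·s₁(z)·s₂(z) = 1. -/
/-- The three cube roots of unity: ζ₀ = 1, ζ₁ = (−1+i√3)/2, ζ₂ = (−1−i√3)/2. -/
noncomputable def ζ : Fin 3 → ℂ :=
  ![1, (-1 + Complex.I * Real.sqrt 3) / 2, (-1 - Complex.I * Real.sqrt 3) / 2]

/-- The generalized trigonometric functions
`s_k(z) = (1/3)(ζ₀^{−k} e^{ζ₀ z} + ζ₁^{−k} e^{ζ₁ z} + ζ₂^{−k} e^{ζ₂ z})`. -/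
noncomputable def s (k : ℕ) (z : ℂ) : ℂ :=
  (1 / 3) * (Complex.exp (ζ 0 * z) / (ζ 0) ^ k + Complex.exp (ζ 1 * z) / (ζ 1) ^ k +
    Complex.exp (ζ 2 * z) / (ζ 2) ^ k)

/-- The main identity (1.4):
`s₀(z)³ + s₁(z)³ + s₂(z)³ − 3 s₀(z) s₁(z) s₂(z) = 1` for all `z ∈ ℂ`. -/
theorem main_identity (z : ℂ) :
    s 0 z ^ 3 + s 1 z ^ 3 + s 2 z ^ 3 - 3 * s 0 z * s 1 z * s 2 z = 1 := by
  obtain ⟨w, hw⟩ : ∃ w, w = ζ 1 := ⟨_, rfl⟩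
  have h0 : ζ 0 = 1 := by simp [ζ]
  have h2 : ζ 2 = -1 - w := by
    rw [hw]; simp [ζ]; ring
  have h3 : ((Real.sqrt 3 : ℝ) : ℂ) ^ 2 = 3 := by
    rw [← Complex.ofReal_pow, Real.sq_sqrt (by norm_num)]; norm_num
  have hq : w ^ 2 + w + 1 = 0 := by
    rw [hw]; simp [ζ]
    linear_combination (1 / 4 : ℂ) * ((Real.sqrt 3 : ℝ) : ℂ) ^ 2 * Complex.I_sq - (1 / 4 : ℂ) * h3
  have hw0 : w ≠ 0 := by
    intro h; rw [h] at hq; norm_num at hq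
  have hv0 : -1 - w ≠ 0 := by
    intro h
    have : (1 : ℂ) = 0 := by linear_combination hq + w * h
    norm_num at this
  have e1 : w⁻¹ = -1 - w := by
    exact inv_eq_of_mul_eq_one_right (by linear_combination -hq)
  have e2 : (-1 - w)⁻¹ = w := by rw [← e1, inv_inv]
  have habc : Complex.exp z * Complex.exp (w * z) * Complex.exp ((-1 - w) * z) = 1 := by
    rw [← Complex.exp_add, ← Complex.exp_add]
    have : z + w * z + (-1 - w) * z = 0 := by ring
    rw [this, Complex.exp_zero]
  simp only [s, h0, h2, ← hw, one_mul, div_eq_mul_inv, ← inv_pow, e1, e2, inv_one, one_pow]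
  generalize Complex.exp z = a at *
  generalize Complex.exp (w * z) = b at *
  generalize Complex.exp ((-1 - w) * z) = c at *
  obtain ⟨x, hx⟩ : ∃ x, x = (a + b + c) / 3 := ⟨_, rfl⟩
  obtain ⟨y, hy⟩ : ∃ y, y = (a + b * (-1 - w) + c * w) / 3 := ⟨_, rfl⟩
  obtain ⟨t, ht⟩ : ∃ t, t = (a + b * w + c * (-1 - w)) / 3 := ⟨_, rfl⟩
  have sq1 : (-1 - w) ^ 2 = w := by linear_combination hq
  have sq2 : w ^ 2 = -1 - w := by linear_combination hq
  have A : x + y + t = a := by rw [hx, hy, ht]; ring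
  have B : x + w * y + (-1 - w) * t = b := by
    rw [hx, hy, ht]; linear_combination (-2 * b / 3 + 2 * c / 3) * hq
  have C : x + (-1 - w) * y + w * t = c := by
    rw [hx, hy, ht]; linear_combination (2 * b / 3 - 2 * c / 3) * hq
  have key : x ^ 3 + y ^ 3 + t ^ 3 - 3 * x * y * t = 1 := by
    rw [← habc, ← A, ← B, ← C]
    have hs : (x + w * y + (-1 - w) * t) * (x + (-1 - w) * y + w * t)
        = x ^ 2 + y ^ 2 + t ^ 2 - x * y - y * t - x * t := by
      linear_combination (-(y - t) ^ 2) * hq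
    rw [mul_assoc (x + y + t), hs]; ring
  rw [sq1, sq2]
  rw [hx, hy, ht] at key
  linear_combination key
end

section
/- For every z ∈ ℂ and all real numbers σ ≥ 0 and τ ≥ 0, one has d(zσ)·d(zτ) ≤ d(z(σ+τ)). -/
/-- The majorant `d(w) = e^{|Im w|} cosh((√3/2) Re w)`. -/
noncomputable def dmaj (w : ℂ) : ℝ :=
  Real.exp |w.im| * Real.cosh (Real.sqrt 3 / 2 * w.re)

/-- Multiplicativity estimate: for every `z ∈ ℂ` and reals `σ, τ ≥ 0`,
`d(zσ) · d(zτ) ≤ d(z(σ+τ))`. -/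
theorem dmaj_mul_le (z : ℂ) (σ τ : ℝ) (hσ : 0 ≤ σ) (hτ : 0 ≤ τ) :
    dmaj (z * (σ : ℂ)) * dmaj (z * (τ : ℂ)) ≤ dmaj (z * ((σ + τ : ℝ) : ℂ)) := by
  have hs : 0 ≤ Real.sinh (Real.sqrt 3 / 2 * (z.re * σ)) * Real.sinh (Real.sqrt 3 / 2 * (z.re * τ)) := by
    rcases le_total 0 z.re with h | h
    · exact mul_nonneg (Real.sinh_nonneg_iff.2 (by positivity)) (Real.sinh_nonneg_iff.2 (by positivity))
    · have h3 : 0 ≤ Real.sqrt 3 / 2 := by positivity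
      exact mul_nonneg_of_nonpos_of_nonpos
        (Real.sinh_nonpos_iff.2 (mul_nonpos_of_nonneg_of_nonpos h3 (mul_nonpos_of_nonpos_of_nonneg h hσ)))
        (Real.sinh_nonpos_iff.2 (mul_nonpos_of_nonneg_of_nonpos h3 (mul_nonpos_of_nonpos_of_nonneg h hτ)))
  simp only [dmaj, Complex.re_mul_ofReal, Complex.im_mul_ofReal, abs_mul, abs_of_nonneg hσ,
    abs_of_nonneg hτ, abs_of_nonneg (add_nonneg hσ hτ)]
  rw [mul_add, mul_add, mul_add, Real.exp_add, Real.cosh_add, mul_mul_mul_comm]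
  exact mul_le_mul_of_nonneg_left (by linarith) (by positivity)
end

section
/- Let g : ℝ → ℂ be continuous and let u, v : ℝ → ℂ be three times differentiable functions satisfying u'''(x) = g(x)·u(x) and v'''(x) = g(x)·v(x) for all x. Then the Wronskian W(x) = u(x)v'(x) − v(x)u'(x) is three times differentiable and satisfies W'''(x) = −g(x)·W(x) for all x ∈ ℝ. -/
/-- If `u''' = g u` and `v''' = g v` with `g` continuous, then the Wronskian
`W = u v' − v u'` is three times differentiable and satisfies `W''' = −g W`. -/
theorem wronskian_adjoint_equation (g : ℝ → ℂ) (hg : Continuous g) (u v : ℝ → ℂ)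
    (hu1 : Differentiable ℝ u) (hu2 : Differentiable ℝ (deriv u))
    (hu3 : Differentiable ℝ (deriv (deriv u)))
    (hv1 : Differentiable ℝ v) (hv2 : Differentiable ℝ (deriv v))
    (hv3 : Differentiable ℝ (deriv (deriv v)))
    (hueq : ∀ x : ℝ, deriv (deriv (deriv u)) x = g x * u x)
    (hveq : ∀ x : ℝ, deriv (deriv (deriv v)) x = g x * v x)
    (W : ℝ → ℂ) (hW : ∀ x : ℝ, W x = u x * deriv v x - v x * deriv u x) :
    (Differentiable ℝ W ∧ Differentiable ℝ (deriv W) ∧ Differentiable ℝ (deriv (deriv W))) ∧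
    (∀ x : ℝ, deriv (deriv (deriv W)) x = -(g x) * W x) := by
  have h1 : ∀ x, HasDerivAt W (u x * deriv (deriv v) x - v x * deriv (deriv u) x) x := by
    intro x
    rw [funext hW]
    refine (((hu1 x).hasDerivAt.mul (hv2 x).hasDerivAt).sub
      ((hv1 x).hasDerivAt.mul (hu2 x).hasDerivAt)).congr_deriv ?_
    ring
  have e1 : deriv W = fun x => u x * deriv (deriv v) x - v x * deriv (deriv u) x :=
    funext fun x => (h1 x).deriv
  have h2 : ∀ x, HasDerivAt (deriv W)
      (deriv u x * deriv (deriv v) x - deriv v x * deriv (deriv u) x) x := by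
    intro x
    rw [e1]
    refine (((hu1 x).hasDerivAt.mul (hv3 x).hasDerivAt).sub
      ((hv1 x).hasDerivAt.mul (hu3 x).hasDerivAt)).congr_deriv ?_
    rw [hueq, hveq]
    ring
  have e2 : deriv (deriv W) =
      fun x => deriv u x * deriv (deriv v) x - deriv v x * deriv (deriv u) x :=
    funext fun x => (h2 x).deriv
  have h3 : ∀ x, HasDerivAt (deriv (deriv W)) (-(g x) * W x) x := by
    intro x
    rw [e2]
    refine (((hu2 x).hasDerivAt.mul (hv3 x).hasDerivAt).sub
      ((hv2 x).hasDerivAt.mul (hu3 x).hasDerivAt)).congr_deriv ?_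
    rw [hueq, hveq, hW]
    ring
  exact ⟨⟨fun x => (h1 x).differentiableAt, fun x => (h2 x).differentiableAt,
    fun x => (h3 x).differentiableAt⟩, fun x => (h3 x).deriv⟩
end

section
/- Let g, g₁ : ℝ → ℂ be continuous and let u, u₁, w, w₁ : ℝ → ℂ be three times differentiable functions satisfying u''' = g·u, u₁''' = g·u₁ + g₁·u, w''' = −g·w and w₁''' = −g·w₁ − g₁·w on ℝ. Then the function Ġ(x) = u₁(x)w''(x) − u₁'(x)w'(x) + u₁''(x)w(x) + u(x)w₁''(x) − u'(x)w₁'(x) + u''(x)w₁(x) is constant in x. -/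
/-- Key computation in Lemma 2.6: if `u''' = g u`, `u₁''' = g u₁ + g₁ u`, `w''' = −g w`
and `w₁''' = −g w₁ − g₁ w` (with `g`, `g₁` continuous), then
`Ġ = u₁ w'' − u₁' w' + u₁'' w + u w₁'' − u' w₁' + u'' w₁` is constant. -/
theorem differentiated_concomitant_constant (g g1 : ℝ → ℂ)
    (hg : Continuous g) (hg1 : Continuous g1) (u u1 w w1 : ℝ → ℂ)
    (hu1 : Differentiable ℝ u) (hu2 : Differentiable ℝ (deriv u))
    (hu3 : Differentiable ℝ (deriv (deriv u)))
    (hu11 : Differentiable ℝ u1) (hu12 : Differentiable ℝ (deriv u1))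
    (hu13 : Differentiable ℝ (deriv (deriv u1)))
    (hw1 : Differentiable ℝ w) (hw2 : Differentiable ℝ (deriv w))
    (hw3 : Differentiable ℝ (deriv (deriv w)))
    (hw11 : Differentiable ℝ w1) (hw12 : Differentiable ℝ (deriv w1))
    (hw13 : Differentiable ℝ (deriv (deriv w1)))
    (hueq : ∀ x : ℝ, deriv (deriv (deriv u)) x = g x * u x)
    (hu1eq : ∀ x : ℝ, deriv (deriv (deriv u1)) x = g x * u1 x + g1 x * u x)
    (hweq : ∀ x : ℝ, deriv (deriv (deriv w)) x = -(g x) * w x)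
    (hw1eq : ∀ x : ℝ, deriv (deriv (deriv w1)) x = -(g x) * w1 x - g1 x * w x)
    (Gdot : ℝ → ℂ)
    (hGdot : ∀ x : ℝ, Gdot x =
      u1 x * deriv (deriv w) x - deriv u1 x * deriv w x + deriv (deriv u1) x * w x +
      u x * deriv (deriv w1) x - deriv u x * deriv w1 x + deriv (deriv u) x * w1 x) :
    ∀ x y : ℝ, Gdot x = Gdot y := by
  have key : ∀ x, HasDerivAt Gdot 0 x := by
    intro x
    have e : Gdot = fun x => u1 x * deriv (deriv w) x - deriv u1 x * deriv w x +
        deriv (deriv u1) x * w x +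
        u x * deriv (deriv w1) x - deriv u x * deriv w1 x + deriv (deriv u) x * w1 x :=
      funext hGdot
    rw [e]
    have h := (((((((hu11 x).hasDerivAt.mul (hw3 x).hasDerivAt).sub
      ((hu12 x).hasDerivAt.mul (hw2 x).hasDerivAt)).add
      ((hu13 x).hasDerivAt.mul (hw1 x).hasDerivAt)).add
      ((hu1 x).hasDerivAt.mul (hw13 x).hasDerivAt)).sub
      ((hu2 x).hasDerivAt.mul (hw12 x).hasDerivAt)).add
      ((hu3 x).hasDerivAt.mul (hw11 x).hasDerivAt))
    refine HasDerivAt.congr_deriv h ?_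
    rw [hueq, hu1eq, hweq, hw1eq]
    ring
  exact is_const_of_deriv_eq_zero (fun x => (key x).differentiableAt) (fun x => (key x).deriv)
end
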